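/- arXiv:2505.23779 — 2 statements merged into one kernel-verified Lean document; each statement's English description precedes it below -/
import Mathlib

section
/- For every real u with 3 ≤ u < 4 one has (1 + log(u − 1))/u + (1/u) · ∫₂^{u−1} (log(t − 1)/t) dt ≥ 0.5607. -/
/-!
Put `v = u - 1`. The Padé bound `log (1 + s) ≥ 2s / (s + 2)`, applied with `s = t - 2`, gives
`log (t - 1) / t ≥ 2 (t - 2) / t²`, whose integral over `[2, v]` is elementary. It remains to show
`3 log v + 4 / v - 0.5607 v ≥ 1.5607 + 2 log 2` for `2 ≤ v ≤ 3`. The left-hand side is convex up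
to its inflection point `8 / 3`, where its tangent line at `5 / 2` (close to the local minimum)
suffices, and concave on `[8 / 3, 3]`, where it is smallest at an endpoint.
-/

open Set

section MulLogAddDivAddMul

variable {a b c v : ℝ} {s : Set ℝ}

lemma hasDerivAt_mul_log_add_div_add_mul (hv : v ≠ 0) :
    HasDerivAt (fun x ↦ a * Real.log x + b / x + c * x) (a / v - b / v ^ 2 + c) v := by
  have h := (((Real.hasDerivAt_log hv).const_mul a).add ((hasDerivAt_inv hv).const_mul b)).add
    ((hasDerivAt_id v).const_mul c)
  exact h.congr_deriv (by ring)

lemma hasDerivAt_div_sub_div_sq_add (hv : v ≠ 0) :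
    HasDerivAt (fun x ↦ a / x - b / x ^ 2 + c) ((2 * b - a * v) / v ^ 3) v := by
  have h := (((hasDerivAt_inv hv).const_mul a).sub
    (((hasDerivAt_pow 2 v).inv (pow_ne_zero 2 hv)).const_mul b)).add_const c
  refine h.congr_deriv ?_
  field_simp
  ring

lemma convexOn_mul_log_add_div_add_mul (hs : Convex ℝ s) (hpos : ∀ x ∈ s, 0 < x)
    (hab : ∀ x ∈ s, a * x ≤ 2 * b) :
    ConvexOn ℝ s (fun x ↦ a * Real.log x + b / x + c * x) := by
  have hne : ∀ x ∈ interior s, x ≠ 0 := fun x hx ↦ (hpos x (interior_subset hx)).ne'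
  refine convexOn_of_hasDerivWithinAt2_nonneg hs
    (fun x hx ↦ (hasDerivAt_mul_log_add_div_add_mul
      (hpos x hx).ne').continuousAt.continuousWithinAt)
    (fun x hx ↦ (hasDerivAt_mul_log_add_div_add_mul (hne x hx)).hasDerivWithinAt)
    (fun x hx ↦ (hasDerivAt_div_sub_div_sq_add (hne x hx)).hasDerivWithinAt) fun x hx ↦ ?_
  have hxs := interior_subset hx
  exact div_nonneg (sub_nonneg.2 (hab x hxs)) (pow_pos (hpos x hxs) 3).le

lemma concaveOn_mul_log_add_div_add_mul (hs : Convex ℝ s) (hpos : ∀ x ∈ s, 0 < x)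
    (hab : ∀ x ∈ s, 2 * b ≤ a * x) :
    ConcaveOn ℝ s (fun x ↦ a * Real.log x + b / x + c * x) := by
  have h : ConvexOn ℝ s (fun x ↦ -a * Real.log x + -b / x + -c * x) :=
    convexOn_mul_log_add_div_add_mul hs hpos fun x hx ↦ by linarith [hab x hx]
  refine neg_convexOn_iff.1 (h.congr fun x _ ↦ ?_)
  simp only [Pi.neg_apply]
  ring

end MulLogAddDivAddMul

lemma add_mul_sub_le_of_convexOn_of_hasDerivAt {s : Set ℝ} {f : ℝ → ℝ} {f' x y : ℝ}
    (hf : ConvexOn ℝ s f) (hx : x ∈ s) (hy : y ∈ s) (hf' : HasDerivAt f f' x) :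
    f x + f' * (y - x) ≤ f y := by
  rcases lt_trichotomy x y with hxy | rfl | hyx
  · have h := hf.le_slope_of_hasDerivAt hx hy hxy hf'
    rw [slope_def_field, le_div_iff₀ (sub_pos.2 hxy)] at h
    linarith
  · simp only [sub_self, mul_zero, add_zero, le_refl]
  · have h := hf.slope_le_of_hasDerivAt hy hx hyx hf'
    rw [slope_def_field, div_le_iff₀ (sub_pos.2 hyx)] at h
    linarith

lemma le_three_mul_log_add_four_div_of_le_eight_div_three {v : ℝ} (hv₀ : 0 < v)
    (hv : v ≤ 8 / 3) :
    0.5607 * (v + 1) + (1 + 2 * Real.log 2) ≤ 3 * Real.log v + 4 / v := by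
  have hconvex : ConvexOn ℝ (Ioc 0 (8 / 3))
      (fun x : ℝ ↦ 3 * Real.log x + 4 / x + -0.5607 * x) :=
    convexOn_mul_log_add_div_add_mul (convex_Ioc _ _) (fun x hx ↦ hx.1)
      fun x hx ↦ by linarith [hx.2]
  have htangent := add_mul_sub_le_of_convexOn_of_hasDerivAt hconvex (x := 5 / 2) (by norm_num)
    ⟨hv₀, hv⟩ (hasDerivAt_mul_log_add_div_add_mul (by norm_num))
  have hlog : Real.log (5 / 2) = Real.log 5 - Real.log 2 :=
    Real.log_div (by norm_num) (by norm_num)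
  norm_num only [hlog] at htangent ⊢
  linarith [Real.log_two_lt_d9, Real.log_five_gt_d9]

lemma le_three_mul_log_add_four_div_of_eight_div_three_le {v : ℝ} (hv : 8 / 3 ≤ v)
    (hv₃ : v ≤ 3) :
    0.5607 * (v + 1) + (1 + 2 * Real.log 2) ≤ 3 * Real.log v + 4 / v := by
  have hconcave : ConcaveOn ℝ (Icc (8 / 3) 3)
      (fun x : ℝ ↦ 3 * Real.log x + 4 / x + -0.5607 * x) :=
    concaveOn_mul_log_add_div_add_mul (convex_Icc _ _) (fun x hx ↦ by linarith [hx.1])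
      fun x hx ↦ by linarith [hx.1]
  suffices hmin : 1.5607 + 2 * Real.log 2 ≤ 3 * Real.log v + 4 / v + -0.5607 * v by linarith
  refine le_trans (le_min ?_ ?_)
    (hconcave.min_le_of_mem_Icc (by norm_num) (by norm_num) ⟨hv, hv₃⟩)
  · have hlog : Real.log (8 / 3) = 3 * Real.log 2 - Real.log 3 := by
      rw [Real.log_div (by norm_num) (by norm_num), show (8 : ℝ) = 2 ^ 3 by norm_num,
        Real.log_pow, Nat.cast_ofNat]
    rw [hlog]
    linarith [Real.log_two_gt_d9, Real.log_three_lt_d9]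
  · linarith [Real.log_two_lt_d9, Real.log_three_gt_d9]

lemma le_three_mul_log_add_four_div {v : ℝ} (hv₀ : 0 < v) (hv₃ : v ≤ 3) :
    0.5607 * (v + 1) + (1 + 2 * Real.log 2) ≤ 3 * Real.log v + 4 / v := by
  rcases le_total v (8 / 3) with hv | hv
  · exact le_three_mul_log_add_four_div_of_le_eight_div_three hv₀ hv
  · exact le_three_mul_log_add_four_div_of_eight_div_three_le hv hv₃

lemma integral_sub_div_sq {a x : ℝ} (ha : 0 < a) (hx : 0 < x) :
    ∫ t in a..x, (t - a) / t ^ 2 = Real.log (x / a) + a / x - 1 := by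
  have hne : ∀ t ∈ uIcc a x, t ≠ 0 := fun t ht ↦ ((lt_min ha hx).trans_le ht.1).ne'
  have hderiv : ∀ t ∈ uIcc a x,
      HasDerivAt (fun t ↦ 1 * Real.log t + a / t + 0 * t) ((t - a) / t ^ 2) t := fun t ht ↦ by
    have ht₀ := hne t ht
    refine (hasDerivAt_mul_log_add_div_add_mul ht₀).congr_deriv ?_
    field_simp
    ring
  have hcont : ContinuousOn (fun t ↦ (t - a) / t ^ 2) (uIcc a x) := by
    fun_prop (disch := exact fun t ht ↦ pow_ne_zero 2 (hne t ht))
  rw [intervalIntegral.integral_eq_sub_of_hasDerivAt hderiv hcont.intervalIntegrable,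
    Real.log_div hx.ne' ha.ne', div_self ha.ne']
  ring

lemma two_mul_sub_two_div_sq_le_log_sub_one_div {t : ℝ} (ht : 2 ≤ t) :
    2 * ((t - 2) / t ^ 2) ≤ Real.log (t - 1) / t := by
  have hpade := Real.le_log_one_add_of_nonneg (sub_nonneg.2 ht)
  rw [sub_add_cancel, show 1 + (t - 2) = t - 1 by ring] at hpade
  calc 2 * ((t - 2) / t ^ 2) = 2 * (t - 2) / t / t := by ring
    _ ≤ Real.log (t - 1) / t := by gcongr

lemma le_integral_log_sub_one_div {x : ℝ} (hx : 2 ≤ x) :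
    2 * (Real.log (x / 2) + 2 / x - 1) ≤ ∫ t in (2 : ℝ)..x, Real.log (t - 1) / t := by
  have htwo_le : ∀ t ∈ uIcc 2 x, 2 ≤ t := fun t ht ↦ (uIcc_of_le hx ▸ ht).1
  have hcont_lower : ContinuousOn (fun t : ℝ ↦ 2 * ((t - 2) / t ^ 2)) (uIcc 2 x) := by
    fun_prop (disch := intro t ht; have := htwo_le t ht; positivity)
  have hcont : ContinuousOn (fun t : ℝ ↦ Real.log (t - 1) / t) (uIcc 2 x) := by
    fun_prop (disch := intro t ht; linarith [htwo_le t ht])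
  rw [← integral_sub_div_sq two_pos (by linarith), ← intervalIntegral.integral_const_mul]
  exact intervalIntegral.integral_mono_on hx hcont_lower.intervalIntegrable
    hcont.intervalIntegrable fun t ht ↦ two_mul_sub_two_div_sq_le_log_sub_one_div ht.1

/-- Lower bound for the Buchstab function on `[3, 4)`:
`(1 + log(u-1))/u + (1/u) ∫₂^{u-1} log(t-1)/t dt ≥ 0.5607`. -/
theorem buchstab_lower_bound_on_three_four (u : ℝ) (h3 : 3 ≤ u) (h4 : u < 4) :
    0.5607 ≤ (1 + Real.log (u - 1)) / u +
      (1 / u) * ∫ t in (2 : ℝ)..(u - 1), Real.log (t - 1) / t := by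
  have hintegral := le_integral_log_sub_one_div (x := u - 1) (by linarith)
  rw [Real.log_div (by linarith) two_ne_zero] at hintegral
  have helementary := le_three_mul_log_add_four_div (v := u - 1) (by linarith) (by linarith)
  have hfour : 4 / (u - 1) = 2 * (2 / (u - 1)) := by ring
  rw [one_div_mul_eq_div, ← add_div, le_div_iff₀ (by linarith)]
  linarith
end

section
/- For every real u with 3 ≤ u < 4 one has (1 + log(u − 1))/u + (1/u) · ∫₂^{u−1} (log(t − 1)/t) dt ≤ 0.5644. -/
/-!
Put `x = u - 1`. Since `log x = log 2 + ∫₂ˣ dt/t`, multiplying the left-hand side by `u` gives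
`1 + log 2 + ∫₂ˣ (1 + log (t - 1)) / t dt`, the integrated form of the delay equation
`(u ω(u))' = ω(u - 1)`. At `x = 2` this is below `0.5644 (x + 1)` by only about `5 · 10⁻⁵`.
The integrand stays well below `0.5644` on `[2, 12/5]`; the margin gained there absorbs the small
excess of the integrand over `0.5644` inside `[12/5, 3]`, and beyond `3` there is no excess.
Each bound on the integrand comes from a tangent line of the logarithm.
-/

open Set intervalIntegral
open MeasureTheory (volume)
open Real (log)

/-- The closed form of the Buchstab function `ω` on `[2, 3]`. It is used here for all `t > 1`,
although it differs from `ω` for `t > 3`. -/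
noncomputable def buchstabTwoThree (t : ℝ) : ℝ := (1 + log (t - 1)) / t

lemma buchstabTwoThree_eq_inv_add (t : ℝ) : buchstabTwoThree t = t⁻¹ + log (t - 1) / t := by
  rw [buchstabTwoThree, add_div, one_div]

lemma log_le_log_add_div_sub_one {a x : ℝ} (ha : 0 < a) (hx : 0 < x) :
    log x ≤ log a + (x / a - 1) := by
  rw [← sub_le_iff_le_add', ← Real.log_div hx.ne' ha.ne']
  exact Real.log_le_sub_one_of_pos (div_pos hx ha)

lemma nat_mul_log_le_nat_mul_log_two_add {x : ℝ} (hx : 0 < x) (n m : ℕ) :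
    n * log x ≤ m * log 2 + (x ^ n / 2 ^ m - 1) := by
  rw [← Real.log_pow, ← Real.log_pow]
  exact log_le_log_add_div_sub_one (by positivity) (by positivity)

lemma log_seven_div_five_le : log (7 / 5) ≤ 0.3366 := by
  -- `(7/5)² ≈ 2`
  have h := nat_mul_log_le_nat_mul_log_two_add (x := 7 / 5) (by norm_num) 2 1
  push_cast at h
  linarith [Real.log_two_lt_d9]

lemma log_seven_div_four_le : log (7 / 4) ≤ 0.56 := by
  -- `(7/4)⁵ ≈ 2⁴`
  have h := nat_mul_log_le_nat_mul_log_two_add (x := 7 / 4) (by norm_num) 5 4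
  push_cast at h
  linarith [Real.log_two_lt_d9]

lemma integral_le_mul_sub {f : ℝ → ℝ} {a b k : ℝ} (hab : a ≤ b)
    (hf : IntervalIntegrable f volume a b) (h : ∀ t ∈ Icc a b, f t ≤ k) :
    ∫ t in a..b, f t ≤ k * (b - a) := by
  calc ∫ t in a..b, f t
      ≤ ∫ _ in a..b, k := integral_mono_on hab hf intervalIntegrable_const h
    _ = k * (b - a) := by rw [integral_const, smul_eq_mul, mul_comm]

lemma continuousOn_log_sub_one_div : ContinuousOn (fun t : ℝ ↦ log (t - 1) / t) (Ioi 1) :=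
  (ContinuousOn.log (by fun_prop) fun _ ht ↦ (sub_pos.2 ht).ne').div continuousOn_id
    fun _ ht ↦ (zero_lt_one.trans ht).ne'

section Integral

variable {a b : ℝ}

lemma intervalIntegrable_log_sub_one_div (ha : 1 < a) (hb : 1 < b) :
    IntervalIntegrable (fun t : ℝ ↦ log (t - 1) / t) volume a b :=
  (continuousOn_log_sub_one_div.mono (ordConnected_Ioi.uIcc_subset ha hb)).intervalIntegrable

lemma intervalIntegrable_inv_of_pos (ha : 0 < a) (hb : 0 < b) :
    IntervalIntegrable (fun t : ℝ ↦ t⁻¹) volume a b :=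
  intervalIntegrable_inv_iff.2 (.inr (notMem_uIcc_of_lt ha hb))

lemma intervalIntegrable_buchstabTwoThree (ha : 1 < a) (hb : 1 < b) :
    IntervalIntegrable buchstabTwoThree volume a b := by
  rw [funext buchstabTwoThree_eq_inv_add]
  exact (intervalIntegrable_inv_of_pos (by linarith) (by linarith)).add
    (intervalIntegrable_log_sub_one_div ha hb)

lemma log_add_integral_log_sub_one_div (ha : 1 < a) (hb : 1 < b) :
    log b + ∫ t in a..b, log (t - 1) / t = log a + ∫ t in a..b, buchstabTwoThree t := by
  have ha₀ : 0 < a := by linarith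
  have hb₀ : 0 < b := by linarith
  simp only [buchstabTwoThree_eq_inv_add]
  rw [integral_add (intervalIntegrable_inv_of_pos ha₀ hb₀)
      (intervalIntegrable_log_sub_one_div ha hb),
    integral_inv_of_pos ha₀ hb₀, Real.log_div hb₀.ne' ha₀.ne']
  ring

end Integral

section PointwiseBounds

variable {t : ℝ}

lemma buchstabTwoThree_le_of_tangent_le {a k : ℝ} (ha : 0 < a) (ht : 1 < t)
    (h : log a + (t - 1) / a ≤ k * t) : buchstabTwoThree t ≤ k := by
  rw [buchstabTwoThree, div_le_iff₀ (by linarith)]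
  linarith [log_le_log_add_div_sub_one ha (sub_pos.2 ht)]

lemma buchstabTwoThree_le_of_le_twelve_div_five (ht : 1 < t) (ht' : t ≤ 12 / 5) :
    buchstabTwoThree t ≤ 0.557 := by
  refine buchstabTwoThree_le_of_tangent_le (a := 7 / 5) (by norm_num) ht ?_
  linarith [log_seven_div_five_le]

lemma buchstabTwoThree_le_of_le_three (ht : 1 < t) (ht' : t ≤ 3) :
    buchstabTwoThree t ≤ 0.568 := by
  refine buchstabTwoThree_le_of_tangent_le (a := 7 / 4) (by norm_num) ht ?_
  linarith [log_seven_div_four_le]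

lemma buchstabTwoThree_le_of_three_le (ht : 3 ≤ t) : buchstabTwoThree t ≤ 0.5644 := by
  refine buchstabTwoThree_le_of_tangent_le (a := 2) (by norm_num) (by linarith) ?_
  linarith [Real.log_two_lt_d9]

end PointwiseBounds

section IntegralBounds

variable {x : ℝ}

lemma integral_buchstabTwoThree_le_of_le_twelve_div_five (hx : 2 ≤ x) (hx' : x ≤ 12 / 5) :
    ∫ t in 2..x, buchstabTwoThree t ≤ 0.557 * (x - 2) :=
  integral_le_mul_sub hx (intervalIntegrable_buchstabTwoThree (by norm_num) (by linarith))
    fun _ ht ↦ buchstabTwoThree_le_of_le_twelve_div_five (by linarith [ht.1]) (ht.2.trans hx')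

lemma integral_buchstabTwoThree_le_of_le_three (hx : 12 / 5 ≤ x) (hx' : x ≤ 3) :
    ∫ t in 2..x, buchstabTwoThree t ≤ 0.557 * (2 / 5) + 0.568 * (x - 12 / 5) := by
  have h_tail : ∫ t in (12 / 5)..x, buchstabTwoThree t ≤ 0.568 * (x - 12 / 5) :=
    integral_le_mul_sub hx (intervalIntegrable_buchstabTwoThree (by norm_num) (by linarith))
      fun _ ht ↦ buchstabTwoThree_le_of_le_three (by linarith [ht.1]) (ht.2.trans hx')
  rw [← integral_add_adjacent_intervals
    (intervalIntegrable_buchstabTwoThree (b := 12 / 5) (by norm_num) (by norm_num))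
    (intervalIntegrable_buchstabTwoThree (by norm_num) (by linarith))]
  linarith [integral_buchstabTwoThree_le_of_le_twelve_div_five (x := 12 / 5)
    (by norm_num) le_rfl]

lemma integral_buchstabTwoThree_le_of_three_le (hx : 3 ≤ x) :
    ∫ t in 2..x, buchstabTwoThree t ≤ 0.557 * (2 / 5) + 0.568 * (3 / 5) + 0.5644 * (x - 3) := by
  have h_tail : ∫ t in 3..x, buchstabTwoThree t ≤ 0.5644 * (x - 3) :=
    integral_le_mul_sub hx (intervalIntegrable_buchstabTwoThree (by norm_num) (by linarith))
      fun _ ht ↦ buchstabTwoThree_le_of_three_le ht.1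
  rw [← integral_add_adjacent_intervals
    (intervalIntegrable_buchstabTwoThree (b := 3) (by norm_num) (by norm_num))
    (intervalIntegrable_buchstabTwoThree (by norm_num) (by linarith))]
  linarith [integral_buchstabTwoThree_le_of_le_three (x := 3) (by norm_num) le_rfl]

lemma one_add_log_two_add_integral_buchstabTwoThree_le (hx : 2 ≤ x) :
    1 + log 2 + ∫ t in 2..x, buchstabTwoThree t ≤ 0.5644 * (x + 1) := by
  have h_two := Real.log_two_lt_d9
  rcases le_total x (12 / 5) with h_le | h_ge
  · linarith [integral_buchstabTwoThree_le_of_le_twelve_div_five hx h_le]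
  rcases le_total x 3 with h_le | h_ge'
  · linarith [integral_buchstabTwoThree_le_of_le_three h_ge h_le]
  · linarith [integral_buchstabTwoThree_le_of_three_le h_ge']

end IntegralBounds

theorem buchstab_upper_bound_on_three_four_general (u : ℝ) (h3 : 3 ≤ u) :
    (1 + Real.log (u - 1)) / u +
      (1 / u) * ∫ t in (2 : ℝ)..(u - 1), Real.log (t - 1) / t ≤ 0.5644 := by
  have h_integral : log (u - 1) + ∫ t in 2..(u - 1), log (t - 1) / t =
      log 2 + ∫ t in 2..(u - 1), buchstabTwoThree t :=
    log_add_integral_log_sub_one_div (by norm_num) (by linarith)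
  have h_bound := one_add_log_two_add_integral_buchstabTwoThree_le (x := u - 1) (by linarith)
  rw [one_div_mul_eq_div, ← add_div, div_le_iff₀ (by linarith)]
  linarith

/-- Upper bound for the Buchstab function on `[3, 4)`:
`(1 + log(u-1))/u + (1/u) ∫₂^{u-1} log(t-1)/t dt ≤ 0.5644`. -/
theorem buchstab_upper_bound_on_three_four (u : ℝ) (h3 : 3 ≤ u) (h4 : u < 4) :
    (1 + Real.log (u - 1)) / u +
      (1 / u) * ∫ t in (2 : ℝ)..(u - 1), Real.log (t - 1) / t ≤ 0.5644 :=
  buchstab_upper_bound_on_three_four_general u h3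
end
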